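/- Let N ≥ 1, let μ_N ⊂ ℂ be the set of N-th roots of unity, and let I be a finite set. The map Conf(ℂ^×, I, Γ) → Conf(ℂ^×, I × μ_N) sending z to the family ((i, ζ) ↦ ζ · z_i) is well defined (its values have pairwise distinct nonzero coordinates) and is a topological embedding, i.e., a homeomorphism onto its image. -/

import Mathlib

/-!
STATEMENT 14: the map `z ↦ ((i,ζ) ↦ ζ·z_i)` is a well-defined topological embedding
`Conf(ℂ^×, I, Γ) → Conf(ℂ^×, I × μ_N)`.
-/

/-- The configuration space of `ℂ^×` over an index set `S`. -/
def conf (S : Type*) : Set (S → ℂ) :=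
  {w | (∀ s, w s ≠ 0) ∧ ∀ s t, s ≠ t → w s ≠ w t}

/-- The `Γ`-twisted configuration space of `ℂ^×` (`Γ = ℤ/Nℤ`). -/
def confGamma (N : ℕ) (I : Type*) : Set (I → ℂ) :=
  {z | (∀ i, z i ≠ 0) ∧ ∀ i j, i ≠ j → ∀ ζ : ℂ, ζ ^ N = 1 → z i ≠ ζ * z j}

/-- The set `μ_N` of complex `N`-th roots of unity, as a subtype of `ℂ`. -/
abbrev muN (N : ℕ) : Type := {ζ : ℂ // ζ ^ N = 1}

/-- The map `Conf(ℂ^×, I, Γ) → Conf(ℂ^×, I × μ_N)` sending `z` to the family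
`(i, ζ) ↦ ζ · z_i`; it is well defined (its values have pairwise distinct nonzero
coordinates). -/
def muMap (N : ℕ) (hN : 0 < N) (I : Type*) (z : confGamma N I) : conf (I × muN N) :=
  ⟨fun p => (p.2 : ℂ) * (z : I → ℂ) p.1, by
    obtain ⟨h0, hd⟩ := z.2
    have hz : ∀ ζ : muN N, (ζ : ℂ) ≠ 0 := by
      intro ζ h
      have h2 := ζ.2
      rw [h, zero_pow hN.ne'] at h2
      exact zero_ne_one h2
    refine ⟨fun p => mul_ne_zero (hz p.2) (h0 p.1), ?_⟩
    rintro ⟨i, ζ⟩ ⟨j, ξ⟩ hpq heq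
    have heq' : (ζ : ℂ) * (z : I → ℂ) i = (ξ : ℂ) * (z : I → ℂ) j := heq
    by_cases hij : i = j
    · subst hij
      have hζξ : (ζ : ℂ) = (ξ : ℂ) := mul_right_cancel₀ (h0 i) heq'
      exact hpq (congrArg (Prod.mk i) (Subtype.ext hζξ))
    · refine hd i j hij ((ζ : ℂ)⁻¹ * (ξ : ℂ)) ?_ ?_
      · rw [mul_pow, inv_pow, ζ.2, ξ.2, inv_one, one_mul]
      · rw [mul_assoc, ← heq', inv_mul_cancel_left₀ (hz ζ)]⟩

/-- For `N ≥ 1`, the map `Conf(ℂ^×, I, Γ) → Conf(ℂ^×, I × μ_N)`,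
`z ↦ ((i, ζ) ↦ ζ·z_i)`, is a topological embedding, i.e. a homeomorphism onto its
image. -/
theorem muMap_isEmbedding (N : ℕ) (hN : 0 < N) (I : Type*) [Fintype I] :
    Topology.IsEmbedding (muMap N hN I) := by
  -- Restricting a family on `I × μ_N` to the slice `ζ = 1` is continuous and recovers `z`,
  -- so the composite is the inclusion of a subspace.
  let r : conf (I × muN N) → I → ℂ := fun w i => (w : I × muN N → ℂ) (i, ⟨1, one_pow N⟩)
  have hr : Continuous r :=
    continuous_pi fun i => (continuous_apply _).comp continuous_subtype_val
  have hf : Continuous (muMap N hN I) :=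
    Continuous.subtype_mk
      (continuous_pi fun p =>
        continuous_const.mul ((continuous_apply p.1).comp continuous_subtype_val)) _
  have hrf : r ∘ muMap N hN I = Subtype.val := by
    funext z i
    exact one_mul _
  exact Topology.IsEmbedding.of_comp hf hr (hrf ▸ Topology.IsEmbedding.subtypeVal)
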